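/- arXiv:0803.1477 — 3 statements merged into one kernel-verified Lean document; each statement's English description precedes it below -/
import Mathlib

section
/- Let R be a commutative ring, let (c_k)_{k≥1} be a sequence in R, and for q ∈ R define a_n(q) = Σ_{π ∈ Π_n} q^{|π|} ∏_{B ∈ π} c_{|B|} (with a_0(q) = 1) and, for n ≥ 1, â_n(q) = Σ_{π ∈ Π_n} q^{|π|-1} ∏_{B ∈ π} c_{|B|}. Then for all q1, q2 ∈ R and all n ≥ 1: â_n(q1 + q2) = Σ_{k=1}^{n} binom(n-1, k-1) · â_k(q1) · a_{n-k}(q2). -/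
open Finset

/-- `a_n(q) = Σ_{π ∈ Π_n} q^{|π|} ∏_{B ∈ π} c_{|B|}` (so `a_0(q) = 1`). -/
noncomputable def aPoly {R : Type*} [CommRing R] (c : ℕ → R) (q : R) (n : ℕ) : R :=
  ∑ π : Finpartition (Finset.univ : Finset (Fin n)),
    q ^ π.parts.card * ∏ B ∈ π.parts, c B.card

/-- `â_n(q) = Σ_{π ∈ Π_n} q^{|π|-1} ∏_{B ∈ π} c_{|B|}`. -/
noncomputable def aHatPoly {R : Type*} [CommRing R] (c : ℕ → R) (q : R) (n : ℕ) : R :=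
  ∑ π : Finpartition (Finset.univ : Finset (Fin n)),
    q ^ (π.parts.card - 1) * ∏ B ∈ π.parts, c B.card

/-- Set partitions of `s`, as a finset of finsets of blocks. -/
def IsPt {α : Type*} [DecidableEq α] (s : Finset α) (P : Finset (Finset α)) : Prop :=
  ∅ ∉ P ∧ (∀ B ∈ P, ∀ C ∈ P, ∀ y, y ∈ B → y ∈ C → B = C) ∧ ∀ y, y ∈ s ↔ ∃ B ∈ P, y ∈ B

open Classical in
noncomputable def Pt {α : Type*} (s : Finset α) : Finset (Finset (Finset α)) :=
  s.powerset.powerset.filter (IsPt s)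

lemma mem_Pt {α : Type*} [DecidableEq α] (s : Finset α) (P : Finset (Finset α)) :
    P ∈ Pt s ↔ IsPt s P := by
  classical
  unfold Pt
  rw [mem_filter]
  constructor
  · rintro ⟨_, h⟩
    exact h
  · intro h
    refine ⟨?_, h⟩
    rw [mem_powerset]
    intro B hB
    rw [mem_powerset]
    intro y hy
    exact (h.2.2 y).2 ⟨B, hB, hy⟩

lemma sum_fp {α R : Type*} [DecidableEq α] [CommRing R] (s : Finset α)
    (f : Finset (Finset α) → R) :
    ∑ π : Finpartition s, f π.parts = ∑ P ∈ Pt s, f P := by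
  classical
  refine Finset.sum_bij (fun π _ => π.parts) ?_ ?_ ?_ ?_
  · intro π _
    rw [mem_Pt]
    refine ⟨π.bot_notMem, ?_, ?_⟩
    · intro B hB C hC y hy hy'
      exact π.eq_of_mem_parts hB hC hy hy'
    · intro y
      constructor
      · intro hy
        exact π.exists_mem hy
      · rintro ⟨B, hB, hy⟩
        exact π.le hB hy
  · intro a _ b _ h
    exact Finpartition.ext h
  · intro P hP
    rw [mem_Pt] at hP
    obtain ⟨h1, h2, h3⟩ := hP
    refine ⟨⟨P, ?_, ?_, h1⟩, mem_univ _, rfl⟩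
    · rw [Finset.supIndep_iff_pairwiseDisjoint]
      intro B hB C hC hne
      simp only [Function.onFun, id]
      rw [Finset.disjoint_left]
      intro y hy hy'
      exact hne (h2 B hB C hC y hy hy')
    · ext y
      rw [Finset.mem_sup, h3]
      rfl
  · intros
    rfl

lemma sum_contains {α R : Type*} [DecidableEq α] [CommRing R] (s : Finset α) (x : α)
    (hx : x ∈ s) (g : Finset α → R) :
    ∑ T ∈ s.powerset with x ∈ T, g T = ∑ T ∈ (s.erase x).powerset, g (insert x T) := by
  symm
  refine Finset.sum_nbij' (fun T => insert x T) (fun T => T.erase x) ?_ ?_ ?_ ?_ ?_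
  · intro T hT
    rw [mem_powerset] at hT
    rw [mem_filter, mem_powerset]
    refine ⟨?_, mem_insert_self _ _⟩
    exact insert_subset hx (hT.trans (erase_subset _ _))
  · intro T hT
    rw [mem_filter, mem_powerset] at hT
    rw [mem_powerset]
    exact erase_subset_erase _ hT.1
  · intro T hT
    rw [mem_powerset] at hT
    exact erase_insert (fun h => notMem_erase _ _ (hT h))
  · intro T hT
    rw [mem_filter] at hT
    exact insert_erase hT.2
  · intros
    rfl

lemma pow_split {α R : Type*} [DecidableEq α] [CommRing R] (P : Finset α) (x : α)
    (hx : x ∈ P) (q1 q2 : R) :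
    (q1 + q2) ^ (P.card - 1) =
      ∑ S ∈ P.powerset with x ∈ S, q1 ^ (S.card - 1) * q2 ^ (P \ S).card := by
  rw [sum_contains P x hx, ← card_erase_of_mem hx, ← Finset.sum_pow_mul_eq_add_pow]
  refine Finset.sum_congr rfl fun T hT => ?_
  rw [mem_powerset] at hT
  have hxT : x ∉ T := fun h => notMem_erase _ _ (hT h)
  rw [card_insert_of_notMem hxT, Nat.add_sub_cancel]
  have : P \ insert x T = (P.erase x) \ T := by
    ext y; simp only [mem_sdiff, mem_insert, mem_erase]; tauto
  rw [this, card_sdiff_of_subset hT]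

lemma key {α R : Type*} [DecidableEq α] [CommRing R] (c : ℕ → R) (q1 q2 : R) (s : Finset α)
    (x : α) (hx : x ∈ s) :
    ∑ P ∈ Pt s, (q1 + q2) ^ (P.card - 1) * ∏ B ∈ P, c B.card
      = ∑ T ∈ s.powerset with x ∈ T,
        (∑ P ∈ Pt T, q1 ^ (P.card - 1) * ∏ B ∈ P, c B.card) *
        (∑ P ∈ Pt (s \ T), q2 ^ P.card * ∏ B ∈ P, c B.card) := by
  classical
  have h1 : ∀ P ∈ Pt s, (q1 + q2) ^ (P.card - 1) * ∏ B ∈ P, c B.card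
      = ∑ S ∈ P.powerset with (∃ B ∈ S, x ∈ B),
        (q1 ^ (S.card - 1) * ∏ B ∈ S, c B.card) *
          (q2 ^ (P \ S).card * ∏ B ∈ P \ S, c B.card) := by
    intro P hP
    rw [mem_Pt] at hP
    obtain ⟨B0, hB0, hxB⟩ := (hP.2.2 x).1 hx
    rw [pow_split P B0 hB0, Finset.sum_mul]
    have : (P.powerset.filter fun S => B0 ∈ S) = P.powerset.filter fun S => ∃ B ∈ S, x ∈ B := by
      apply Finset.filter_congr
      intro S hS
      rw [mem_powerset] at hS
      constructor
      · intro h; exact ⟨B0, h, hxB⟩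
      · rintro ⟨B, hB, hxB'⟩
        rwa [hP.2.1 B0 hB0 B (hS hB) x hxB hxB']
    rw [this]
    refine Finset.sum_congr rfl fun S hS => ?_
    rw [mem_filter, mem_powerset] at hS
    rw [← Finset.prod_sdiff hS.1]
    ring
  rw [Finset.sum_congr rfl h1]
  simp_rw [Finset.sum_mul_sum]
  simp_rw [← Finset.sum_product']
  rw [Finset.sum_sigma', Finset.sum_sigma']
  refine Finset.sum_bij' (fun a _ => ⟨a.2.biUnion id, (a.2, a.1 \ a.2)⟩)
    (fun a _ => ⟨a.2.1 ∪ a.2.2, a.2.1⟩) ?_ ?_ ?_ ?_ ?_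
  · rintro ⟨P, S⟩ h
    simp only [mem_sigma, mem_filter, mem_powerset, mem_product, mem_Pt, mem_biUnion, id] at h ⊢
    obtain ⟨⟨h1, h2, h3⟩, hS, hxS⟩ := h
    refine ⟨⟨?_, hxS⟩, ⟨?_, ?_, ?_⟩, ?_, ?_, ?_⟩
    · intro y hy
      rw [mem_biUnion] at hy
      obtain ⟨B, hB, hy⟩ := hy
      exact (h3 y).2 ⟨B, hS hB, hy⟩
    · exact fun h => h1 (hS h)
    · exact fun B hB C hC => h2 B (hS hB) C (hS hC)
    · intro y; simp
    · exact fun h => h1 (mem_sdiff.1 h).1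
    · exact fun B hB C hC => h2 B (mem_sdiff.1 hB).1 C (mem_sdiff.1 hC).1
    · intro y
      simp only [mem_sdiff, mem_biUnion, id, h3]
      constructor
      · rintro ⟨⟨B, hB, hy⟩, hn⟩
        exact ⟨B, ⟨hB, fun h => hn ⟨B, h, hy⟩⟩, hy⟩
      · rintro ⟨B, ⟨hB, hBS⟩, hy⟩
        refine ⟨⟨B, hB, hy⟩, ?_⟩
        rintro ⟨C, hC, hyC⟩
        rw [h2 B hB C (hS hC) y hy hyC] at hBS
        exact hBS hC
  · rintro ⟨T, P, Q⟩ h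
    simp only [mem_sigma, mem_filter, mem_powerset, mem_product, mem_Pt] at h ⊢
    obtain ⟨⟨hT, hxT⟩, ⟨h1, h2, h3⟩, k1, k2, k3⟩ := h
    have hd : ∀ B ∈ P, ∀ C ∈ Q, ∀ y, y ∈ B → y ∈ C → False := by
      intro B hB C hC y hy hy'
      exact (mem_sdiff.1 ((k3 y).2 ⟨C, hC, hy'⟩)).2 ((h3 y).2 ⟨B, hB, hy⟩)
    refine ⟨⟨?_, ?_, ?_⟩, subset_union_left, (h3 x).1 hxT⟩
    · rw [mem_union]; tauto
    · intro B hB C hC y hy hy'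
      rw [mem_union] at hB hC
      rcases hB with hB | hB <;> rcases hC with hC | hC
      · exact h2 B hB C hC y hy hy'
      · exact (hd B hB C hC y hy hy').elim
      · exact (hd C hC B hB y hy' hy).elim
      · exact k2 B hB C hC y hy hy'
    · intro y
      have e : y ∈ s ↔ y ∈ T ∨ y ∈ s \ T := by
        rw [mem_sdiff]
        have := @hT y
        tauto
      rw [e, h3, k3]
      simp only [mem_union, or_and_right, exists_or]
  · rintro ⟨P, S⟩ h
    simp only [mem_sigma, mem_filter, mem_powerset] at h
    simp only [Finset.union_sdiff_of_subset h.2.1]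
  · rintro ⟨T, P, Q⟩ h
    simp only [mem_sigma, mem_filter, mem_powerset, mem_product, mem_Pt] at h
    obtain ⟨⟨hT, hxT⟩, ⟨h1, h2, h3⟩, k1, k2, k3⟩ := h
    have e1 : P.biUnion id = T := by
      ext y; rw [h3]; simp
    have e2 : (P ∪ Q) \ P = Q := by
      rw [Finset.union_sdiff_left]
      rw [Finset.sdiff_eq_self_iff_disjoint, Finset.disjoint_left]
      intro B hB hB'
      rcases B.eq_empty_or_nonempty with h | ⟨y, hy⟩
      · exact k1 (h ▸ hB)
      · exact (mem_sdiff.1 ((k3 y).2 ⟨B, hB, hy⟩)).2 ((h3 y).2 ⟨B, hB', hy⟩)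
    simp only [e1, e2]
  · intros
    rfl

lemma sum_map_Pt {α β R : Type*} [DecidableEq α] [DecidableEq β] [CommRing R] (c : ℕ → R)
    (w : ℕ → R) (f : α ↪ β) (s : Finset α) :
    ∑ P ∈ Pt s, w P.card * ∏ B ∈ P, c B.card
      = ∑ P ∈ Pt (s.map f), w P.card * ∏ B ∈ P, c B.card := by
  refine Finset.sum_bij (fun P _ => P.map (mapEmbedding f).toEmbedding) ?_ ?_ ?_ ?_
  · intro P hP
    rw [mem_Pt] at hP ⊢
    obtain ⟨h1, h2, h3⟩ := hP
    refine ⟨?_, ?_, ?_⟩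
    · intro h
      rw [mem_map] at h
      obtain ⟨B, hB, e⟩ := h
      have : B = ∅ := by simpa using e
      exact h1 (this ▸ hB)
    · intro B hB C hC y hy hy'
      rw [mem_map] at hB hC
      obtain ⟨B, hB, rfl⟩ := hB
      obtain ⟨C, hC, rfl⟩ := hC
      simp only [RelEmbedding.coe_toEmbedding, mapEmbedding_apply, mem_map] at hy hy'
      obtain ⟨b, hb, rfl⟩ := hy
      obtain ⟨b', hb', e⟩ := hy'
      have := f.injective e
      subst this
      rw [h2 B hB C hC _ hb hb']
    · intro y
      simp only [mem_map, RelEmbedding.coe_toEmbedding, mapEmbedding_apply, h3]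
      constructor
      · rintro ⟨a, ⟨B, hB, ha⟩, rfl⟩
        exact ⟨B.map f, ⟨B, hB, rfl⟩, mem_map_of_mem _ ha⟩
      · rintro ⟨_, ⟨B, hB, rfl⟩, hy⟩
        rw [mem_map] at hy
        obtain ⟨a, ha, rfl⟩ := hy
        exact ⟨a, ⟨B, hB, ha⟩, rfl⟩
  · intro P _ Q _ h
    exact Finset.map_injective _ h
  · intro Q hQ
    rw [mem_Pt] at hQ
    obtain ⟨h1, h2, h3⟩ := hQ
    have hsub : ∀ B ∈ Q, ∃ A : Finset α, A ⊆ s ∧ A.map f = B := by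
      intro B hB
      have : B ⊆ s.map f := fun y hy => (h3 y).2 ⟨B, hB, hy⟩
      obtain ⟨A, hA, e⟩ := Finset.subset_map_iff.1 this
      exact ⟨A, hA, e.symm⟩
    have hmem : ∀ A : Finset α, A ∈ (s.powerset.filter fun A => A.map f ∈ Q) ↔ A.map f ∈ Q := by
      intro A
      rw [mem_filter, mem_powerset]
      refine ⟨fun h => h.2, fun h => ⟨?_, h⟩⟩
      obtain ⟨A', hA', e⟩ := hsub _ h
      rwa [← Finset.map_injective f e]
    refine ⟨s.powerset.filter fun A => A.map f ∈ Q, ?_, ?_⟩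
    · rw [mem_Pt]
      refine ⟨?_, ?_, ?_⟩
      · rw [hmem, map_empty]; exact h1
      · intro B hB C hC y hy hy'
        rw [hmem] at hB hC
        exact Finset.map_injective f
          (h2 _ hB _ hC (f y) (mem_map_of_mem _ hy) (mem_map_of_mem _ hy'))
      · intro y
        have := h3 (f y)
        rw [mem_map' f] at this
        rw [this]
        constructor
        · rintro ⟨B, hB, hy⟩
          obtain ⟨A, hA, rfl⟩ := hsub B hB
          exact ⟨A, (hmem A).2 hB, (mem_map' f).1 hy⟩
        · rintro ⟨A, hA, hy⟩
          exact ⟨A.map f, (hmem A).1 hA, mem_map_of_mem _ hy⟩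
    · ext B
      simp only [mem_map, RelEmbedding.coe_toEmbedding, mapEmbedding_apply, hmem]
      constructor
      · rintro ⟨A, hA, rfl⟩
        exact hA
      · intro hB
        obtain ⟨A, hA, rfl⟩ := hsub B hB
        exact ⟨A, hB, rfl⟩
  · intro P _
    simp

lemma by_card {β R : Type*} [DecidableEq β] [CommRing R] (c : ℕ → R)
    (w : ℕ → R) (s : Finset β) :
    ∑ P ∈ Pt s, w P.card * ∏ B ∈ P, c B.card
      = ∑ π : Finpartition (Finset.univ : Finset (Fin s.card)),
        w π.parts.card * ∏ B ∈ π.parts, c B.card := by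
  rw [sum_fp (univ : Finset (Fin s.card)) (fun P => w P.card * ∏ B ∈ P, c B.card)]
  rw [sum_map_Pt c w (s.equivFin.symm.toEmbedding.trans (Function.Embedding.subtype _))]
  congr 2
  ext y
  simp only [mem_map, mem_univ, true_and, Function.Embedding.trans_apply,
    Equiv.coe_toEmbedding, Function.Embedding.subtype_apply]
  constructor
  · intro hy
    exact ⟨s.equivFin ⟨y, hy⟩, by simp⟩
  · rintro ⟨a, rfl⟩
    exact (s.equivFin.symm a).2

theorem stmt1 {R : Type*} [CommRing R] (c : ℕ → R) (q1 q2 : R) (n : ℕ) (hn : 1 ≤ n) :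
    aHatPoly c (q1 + q2) n
      = ∑ k ∈ Finset.Icc 1 n,
          ((n - 1).choose (k - 1) : R) * aHatPoly c q1 k * aPoly c q2 (n - k) := by
  obtain ⟨m, rfl⟩ : ∃ m, n = m + 1 := ⟨n - 1, by omega⟩
  have h0 : aHatPoly c (q1 + q2) (m + 1) =
      ∑ T ∈ (univ : Finset (Fin (m + 1))).powerset with 0 ∈ T,
        aHatPoly c q1 T.card * aPoly c q2 (m + 1 - T.card) := by
    unfold aHatPoly
    rw [sum_fp univ (fun P => (q1 + q2) ^ (P.card - 1) * ∏ B ∈ P, c B.card),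
      key c q1 q2 univ 0 (mem_univ _)]
    refine Finset.sum_congr rfl fun T _ => ?_
    rw [by_card c (fun k => q1 ^ (k - 1)) T, by_card c (fun k => q2 ^ k) (univ \ T)]
    have e : (univ \ T).card = m + 1 - T.card := by
      rw [card_sdiff_of_subset (subset_univ _)]; simp
    rw [← e]
    rfl
  rw [h0, sum_contains _ _ (mem_univ _)]
  have h1 : ∀ T ∈ ((univ : Finset (Fin (m + 1))).erase 0).powerset,
      aHatPoly c q1 (insert 0 T).card * aPoly c q2 (m + 1 - (insert 0 T).card)
      = (fun k => aHatPoly c q1 (k + 1) * aPoly c q2 (m + 1 - (k + 1))) T.card := by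
    intro T hT
    rw [mem_powerset] at hT
    rw [card_insert_of_notMem (fun h => notMem_erase _ _ (hT h))]
  rw [Finset.sum_congr rfl h1, Finset.sum_powerset_apply_card
    (fun k => aHatPoly c q1 (k + 1) * aPoly c q2 (m + 1 - (k + 1)))]
  have e : ((univ : Finset (Fin (m + 1))).erase 0).card = m := by simp
  rw [e, ← Finset.Ico_add_one_right_eq_Icc, Finset.sum_Ico_eq_sum_range]
  refine Finset.sum_congr (by simp) fun k _ => ?_
  rw [nsmul_eq_mul, Nat.add_comm 1 k]
  simp only [Nat.add_sub_cancel]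
  ring
end

section
/- Let G = (V,E) be a finite simple graph with |V| ≥ 2, let R be a commutative ring, let v : E → R be edge weights, let q ∈ R, and fix a vertex j ∈ V. Then Ẑ_G(q, v) = Σ_{π ∈ Π(V∖{j})} ∏_{B ∈ π} [ q - 1 + ∏_{e ∈ E(B,j)} (1 + v_e) ] · C_{G[B]}(v), where the sum runs over all partitions π of V∖{j} into nonempty blocks and E(B,j) denotes the set of edges of G with one endpoint in the block B and the other endpoint equal to j. -/
open Finset SimpleGraph

/-- The number of connected components of the graph on the vertex set `W`
with edge set `A` (isolated vertices count as components). -/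
noncomputable def kcomp {V : Type*} [Fintype V] [DecidableEq V]
    (W : Finset V) (A : Finset (Sym2 V)) : ℕ :=
  Nat.card ((SimpleGraph.fromEdgeSet (A : Set (Sym2 V))).induce (W : Set V)).ConnectedComponent

/-- The edges of `G` with both endpoints in `W`, i.e. the edges of the
induced subgraph `G[W]`. -/
def edgesWithin {V : Type*} [Fintype V] [DecidableEq V]
    (G : SimpleGraph V) [DecidableRel G.Adj] (W : Finset V) : Finset (Sym2 V) :=
  G.edgeFinset.filter (fun e => ∀ x ∈ e, x ∈ W)

/-- The multivariate Tutte polynomial of the induced subgraph `G[W]`: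
`Z_{G[W]}(q,v) = Σ_{A ⊆ E(G[W])} q^{k(A)} ∏_{e ∈ A} v_e`. -/
noncomputable def Zmv {V : Type*} [Fintype V] [DecidableEq V] {R : Type*} [CommRing R]
    (G : SimpleGraph V) [DecidableRel G.Adj] (W : Finset V) (q : R) (v : Sym2 V → R) : R :=
  ∑ A ∈ (edgesWithin G W).powerset, q ^ kcomp W A * ∏ e ∈ A, v e

/-- `Ẑ_{G[W]}(q,v) = Σ_{A ⊆ E(G[W])} q^{k(A)-1} ∏_{e ∈ A} v_e`. -/
noncomputable def ZhatMv {V : Type*} [Fintype V] [DecidableEq V] {R : Type*} [CommRing R]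
    (G : SimpleGraph V) [DecidableRel G.Adj] (W : Finset V) (q : R) (v : Sym2 V → R) : R :=
  ∑ A ∈ (edgesWithin G W).powerset, q ^ (kcomp W A - 1) * ∏ e ∈ A, v e

/-- The generating polynomial of connected spanning subgraphs of `G[W]`:
`C_{G[W]}(v) = Σ_{A ⊆ E(G[W]) : k(A)=1} ∏_{e ∈ A} v_e`. -/
noncomputable def Cmv {V : Type*} [Fintype V] [DecidableEq V] {R : Type*} [CommRing R]
    (G : SimpleGraph V) [DecidableRel G.Adj] (W : Finset V) (v : Sym2 V → R) : R :=
  ∑ A ∈ (edgesWithin G W).powerset.filter (fun A => kcomp W A = 1), ∏ e ∈ A, v e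

/-- The edges of `G` with one endpoint in `W` and the other endpoint equal to `j`. -/
def edgesTo {V : Type*} [Fintype V] [DecidableEq V]
    (G : SimpleGraph V) [DecidableRel G.Adj] (W : Finset V) (j : V) : Finset (Sym2 V) :=
  G.edgeFinset.filter (fun e => ∃ x ∈ W, e = s(x, j))
section S17

theorem s17_sum_union {α R : Type*} [DecidableEq α] [CommRing R] (S T : Finset α)
    (h : Disjoint S T) (g k : Finset α → R) :
    ∑ A ∈ (S ∪ T).powerset, g (A ∩ S) * k (A ∩ T)
      = (∑ A ∈ S.powerset, g A) * ∑ A ∈ T.powerset, k A := by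
  rw [Finset.sum_mul_sum, ← Finset.sum_product']
  refine Finset.sum_bij' (fun A _ => (A ∩ S, A ∩ T)) (fun p _ => p.1 ∪ p.2) ?_ ?_ ?_ ?_ ?_
  · intro A hA; simp
  · rintro ⟨p, r⟩ hp
    simp only [mem_product, Finset.mem_powerset] at hp ⊢
    exact Finset.union_subset_union hp.1 hp.2
  · intro A hA
    simp only [Finset.mem_powerset] at hA
    simp only
    rw [← Finset.inter_union_distrib_left]
    exact Finset.inter_eq_left.2 hA
  · rintro ⟨p, r⟩ hp
    simp only [mem_product, Finset.mem_powerset] at hp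
    have := Finset.disjoint_left.1 h
    ext x
    · simp only [Finset.mem_inter, Finset.mem_union]
      grind
    · simp only [Finset.mem_inter, Finset.mem_union]
      grind
  · intro A hA; rfl

theorem s17_sum_biUnion {α ι R : Type*} [DecidableEq α] [DecidableEq ι] [CommRing R]
    (s : Finset ι) (t : ι → Finset α)
    (h : ∀ i ∈ s, ∀ k ∈ s, i ≠ k → Disjoint (t i) (t k)) (f : ι → Finset α → R) :
    ∑ A ∈ (s.biUnion t).powerset, ∏ i ∈ s, f i (A ∩ t i)
      = ∏ i ∈ s, ∑ A ∈ (t i).powerset, f i A := by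
  induction s using Finset.induction_on with
  | empty => simp
  | insert a s ha ih =>
    rw [Finset.prod_insert ha, ← ih (fun i hi k hk => h i (by simp [hi]) k (by simp [hk])),
      Finset.biUnion_insert, ← s17_sum_union]
    · refine Finset.sum_congr rfl fun A _ => ?_
      rw [Finset.prod_insert ha]
      congr 1
      refine Finset.prod_congr rfl fun i hi => ?_
      rw [Finset.inter_assoc, Finset.inter_eq_right.2 (Finset.subset_biUnion_of_mem t hi)]
    · rw [Finset.disjoint_biUnion_right]
      intro i hi
      exact h a (by simp) i (by simp [hi]) (by rintro rfl; exact ha hi)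

variable {V : Type*} [Fintype V] [DecidableEq V] {R : Type*} [CommRing R]

/-- summand attached to a block -/
noncomputable def s17_f (G : SimpleGraph V) [DecidableRel G.Adj] (q : R) (v : Sym2 V → R) (j : V)
    (B : Finset V) (A : Finset (Sym2 V)) : R :=
  ((if kcomp B (A ∩ edgesWithin G B) = 1 then 1 else 0) * ∏ e ∈ A ∩ edgesWithin G B, v e) *
    ((if A ∩ edgesTo G B j = ∅ then q else 1) * ∏ e ∈ A ∩ edgesTo G B j, v e)

theorem s17_disj (G : SimpleGraph V) [DecidableRel G.Adj] (j : V) (B : Finset V) (hB : j ∉ B) :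
    Disjoint (edgesWithin G B) (edgesTo G B j) := by
  rw [Finset.disjoint_left]
  intro e he he'
  simp only [edgesWithin, edgesTo, Finset.mem_filter] at he he'
  obtain ⟨x, hx, rfl⟩ := he'.2
  exact hB (he.2 j (by simp))

theorem s17_block (G : SimpleGraph V) [DecidableRel G.Adj] (q : R) (v : Sym2 V → R) (j : V)
    (B : Finset V) (hB : j ∉ B) :
    ∑ A ∈ (edgesWithin G B ∪ edgesTo G B j).powerset, s17_f G q v j B A
      = (q - 1 + ∏ e ∈ edgesTo G B j, (1 + v e)) * Cmv G B v := by
  unfold s17_f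
  rw [s17_sum_union _ _ (s17_disj G j B hB)
    (fun A => (if kcomp B A = 1 then 1 else 0) * ∏ e ∈ A, v e)
    (fun A => (if A = ∅ then q else 1) * ∏ e ∈ A, v e), mul_comm]
  congr 1
  · rw [Finset.prod_one_add]
    have : ∀ A ∈ (edgesTo G B j).powerset, (if A = ∅ then q else 1) * ∏ e ∈ A, v e
        = (if A = ∅ then q - 1 else 0) + ∏ e ∈ A, v e := by
      intro A _
      split_ifs with h
      · subst h; simp
      · simp
    rw [Finset.sum_congr rfl this, Finset.sum_add_distrib, Finset.sum_ite_eq']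
    simp
  · simp [Cmv, Finset.sum_filter]

/-- `π` is the partition into components of `A` away from `j`. -/
def s17_valid (G : SimpleGraph V) [DecidableRel G.Adj] (j : V) (A : Finset (Sym2 V))
    (π : Finpartition ((Finset.univ : Finset V).erase j)) : Prop :=
  A ⊆ π.parts.biUnion (fun B => edgesWithin G B ∪ edgesTo G B j) ∧
    ∀ B ∈ π.parts, kcomp B (A ∩ edgesWithin G B) = 1

theorem s17_nj {j : V} (π : Finpartition ((Finset.univ : Finset V).erase j)) {B : Finset V}
    (hB : B ∈ π.parts) : j ∉ B := fun h => by
  have := π.le hB h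
  simp at this

theorem s17_uniqB {j : V} (π : Finpartition ((Finset.univ : Finset V).erase j)) {B C : Finset V}
    (hB : B ∈ π.parts) (hC : C ∈ π.parts) {x : V} (hx : x ∈ B) (hy : x ∈ C) : B = C :=
  π.eq_of_mem_parts hB hC hx hy

theorem s17_tdisj (G : SimpleGraph V) [DecidableRel G.Adj] {j : V}
    (π : Finpartition ((Finset.univ : Finset V).erase j)) :
    ∀ i ∈ π.parts, ∀ k ∈ π.parts, i ≠ k →
      Disjoint (edgesWithin G i ∪ edgesTo G i j) (edgesWithin G k ∪ edgesTo G k j) := by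
  intro B hB C hC hne
  rw [Finset.disjoint_left]
  intro e he he'
  have h1 := s17_nj π hB
  have h2 := s17_nj π hC
  induction e with | _ x y =>
  simp only [edgesWithin, edgesTo, Finset.mem_union, Finset.mem_filter, Sym2.mem_iff,
    Sym2.eq_iff, mem_edgeFinset, mem_edgeSet] at he he'
  have h3 : ∀ z, z ∈ B → z ∈ C → False := fun z hz hz' => hne (s17_uniqB π hB hC hz hz')
  have h4 := h3 x
  have h5 := h3 y
  simp only [forall_eq_or_imp, forall_eq] at he he'
  grind

/-- reach in a connected block -/
theorem s17_reach {B : Finset V} {A : Finset (Sym2 V)} (h : kcomp B A = 1) {x y : V}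
    (hx : x ∈ B) (hy : y ∈ B) : (SimpleGraph.fromEdgeSet (A : Set (Sym2 V))).Reachable x y := by
  unfold kcomp at h
  rw [Nat.card_eq_one_iff_unique] at h
  have h1 := h.1
  have := SimpleGraph.ConnectedComponent.exact
    (Subsingleton.elim (SimpleGraph.connectedComponentMk
      ((SimpleGraph.fromEdgeSet (A : Set (Sym2 V))).induce (B : Set V)) ⟨x, hx⟩)
      (SimpleGraph.connectedComponentMk _ ⟨y, hy⟩))
  exact this.map (SimpleGraph.Embedding.induce (B : Set V)).toHom

theorem s17_closed {H : SimpleGraph V} {P : V → Prop} (hP : ∀ x y, H.Adj x y → P x → P y)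
    {x y : V} (h : H.Reachable x y) (hx : P x) : P y := by
  rw [SimpleGraph.reachable_iff_reflTransGen] at h
  induction h with
  | refl => exact hx
  | tail _ h ih => exact hP _ _ h ih

/-- away graph -/
def s17_H (j : V) (A : Finset (Sym2 V)) : SimpleGraph V :=
  SimpleGraph.fromEdgeSet ((A.filter (fun e => j ∉ e) : Finset (Sym2 V)) : Set (Sym2 V))

theorem s17_H_adj (j : V) (A : Finset (Sym2 V)) (x y : V) :
    (s17_H j A).Adj x y ↔ s(x, y) ∈ A ∧ x ≠ j ∧ y ≠ j ∧ x ≠ y := by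
  simp only [s17_H, fromEdgeSet_adj, Finset.coe_filter, Set.mem_ofPred_eq, Sym2.mem_iff]
  grind

/-- the two endpoints of an edge away from `j` lie in the same block -/
theorem s17_same {G : SimpleGraph V} [DecidableRel G.Adj] {j : V} {A : Finset (Sym2 V)}
    {π : Finpartition ((Finset.univ : Finset V).erase j)} (h : s17_valid G j A π)
    {x y : V} (hxy : s(x, y) ∈ A) (hx : x ≠ j) (hy : y ≠ j) {B : Finset V} (hB : B ∈ π.parts)
    (hxB : x ∈ B) : y ∈ B := by
  have := h.1 hxy
  simp only [Finset.mem_biUnion, edgesWithin, edgesTo, Finset.mem_union, Finset.mem_filter,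
    Sym2.mem_iff, Sym2.eq_iff] at this
  obtain ⟨C, hC, hh⟩ := this
  have : x ∈ C ∧ y ∈ C := by grind
  rw [s17_uniqB π hB hC hxB this.1]
  exact this.2

theorem s17_part {G : SimpleGraph V} [DecidableRel G.Adj] {j : V} {A : Finset (Sym2 V)}
    {π : Finpartition ((Finset.univ : Finset V).erase j)} (h : s17_valid G j A π)
    {B : Finset V} (hB : B ∈ π.parts) {x : V} (hx : x ∈ B) (y : V) :
    y ∈ B ↔ (s17_H j A).Reachable x y := by
  have hj := s17_nj π hB
  constructor
  · intro hy
    refine (s17_reach (h.2 B hB) hx hy).mono ?_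
    apply SimpleGraph.fromEdgeSet_mono
    intro e he
    simp only [edgesWithin, Finset.coe_inter, Finset.coe_filter, Set.mem_inter_iff,
      Finset.mem_coe, Set.mem_ofPred_eq] at he ⊢
    exact ⟨he.1, fun hje => hj (he.2.2 j hje)⟩
  · intro hr
    refine s17_closed (P := fun y => y ∈ B) ?_ hr hx
    intro a b hab ha
    rw [s17_H_adj] at hab
    exact s17_same h hab.1 hab.2.1 hab.2.2.1 hB ha

theorem s17_unique {G : SimpleGraph V} [DecidableRel G.Adj] {j : V} {A : Finset (Sym2 V)}
    {π ρ : Finpartition ((Finset.univ : Finset V).erase j)} (h : s17_valid G j A π)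
    (h' : s17_valid G j A ρ) : π = ρ := by
  have key : ∀ {π ρ : Finpartition ((Finset.univ : Finset V).erase j)}, s17_valid G j A π →
      s17_valid G j A ρ → π.parts ⊆ ρ.parts := by
    intro π ρ h h' B hB
    obtain ⟨x, hx⟩ := π.nonempty_of_mem_parts hB
    obtain ⟨C, hC, hxC⟩ := ρ.exists_mem (π.le hB hx)
    have : B = C := by
      ext y
      rw [s17_part h hB hx, s17_part h' hC hxC]
    rwa [this]
  ext1
  exact Finset.Subset.antisymm (key h h') (key h' h)

theorem s17_exists (G : SimpleGraph V) [DecidableRel G.Adj] (j : V) (A : Finset (Sym2 V))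
    (hA : A ⊆ G.edgeFinset) : ∃ π, s17_valid G j A π := by
  classical
  let π : Finpartition ((Finset.univ : Finset V).erase j) :=
    Finpartition.ofSetSetoid (s17_H j A).reachableSetoid _
  have hπ : ∀ B ∈ π.parts, ∃ x ∈ B, ∀ y, y ∈ B ↔ (s17_H j A).Reachable x y := by
    intro B hB
    change B ∈ Finset.image _ _ at hB
    rw [Finset.mem_image] at hB
    obtain ⟨x, hx, rfl⟩ := hB
    have hxj : x ≠ j := by simpa using hx
    refine ⟨x, Finset.mem_filter.2 ⟨hx, SimpleGraph.Reachable.refl _⟩, fun y => ?_⟩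
    rw [Finset.mem_filter]
    refine ⟨fun h => h.2, fun h => ⟨?_, h⟩⟩
    have : y ≠ j := s17_closed (P := fun y => y ≠ j)
      (fun a b hab _ => ((s17_H_adj j A a b).1 hab).2.2.1) h hxj
    simp [this]
  have hj : ∀ x, x ≠ j → ∃ B ∈ π.parts, x ∈ B := fun x hx => π.exists_mem (by simp [hx])
  refine ⟨π, ?_, ?_⟩
  · intro e he
    have heG := hA he
    simp only [Finset.mem_biUnion, edgesWithin, edgesTo, Finset.mem_union, Finset.mem_filter, heG,
      true_and]
    induction e with | _ x y =>
    have hne : x ≠ y := by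
      rw [mem_edgeFinset, mem_edgeSet] at heG
      exact heG.ne
    by_cases hx : x = j
    · subst hx
      obtain ⟨B, hB, hy⟩ := hj y hne.symm
      exact ⟨B, hB, Or.inr ⟨y, hy, Sym2.eq_swap⟩⟩
    · by_cases hy : y = j
      · subst hy
        obtain ⟨B, hB, hy⟩ := hj x hne
        exact ⟨B, hB, Or.inr ⟨x, hy, rfl⟩⟩
      · obtain ⟨B, hB, hxB⟩ := hj x hx
        refine ⟨B, hB, Or.inl ?_⟩
        obtain ⟨z, hz, hzB⟩ := hπ B hB
        have hyB : y ∈ B := by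
          rw [hzB] at hxB ⊢
          exact hxB.trans (SimpleGraph.Adj.reachable ((s17_H_adj j A x y).2 ⟨he, hx, hy, hne⟩))
        intro w hw
        rw [Sym2.mem_iff] at hw
        rcases hw with rfl | rfl <;> assumption
  · intro B hB
    obtain ⟨z, hz, hzB⟩ := hπ B hB
    unfold kcomp
    set K := (SimpleGraph.fromEdgeSet ((A ∩ edgesWithin G B : Finset (Sym2 V)) : Set (Sym2 V))).induce
      (B : Set V) with hK
    have key : ∀ y, (s17_H j A).Reachable z y → ∃ hy : y ∈ B, K.Reachable ⟨z, hz⟩ ⟨y, hy⟩ := by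
      intro y hy
      refine s17_closed (P := fun y => ∃ hy : y ∈ B, K.Reachable ⟨z, hz⟩ ⟨y, hy⟩) ?_ hy
        ⟨hz, SimpleGraph.Reachable.refl _⟩
      rintro a b hab ⟨ha, har⟩
      have hb : b ∈ B := by
        rw [hzB] at ha ⊢
        exact ha.trans hab.reachable
      refine ⟨hb, har.trans (SimpleGraph.Adj.reachable ?_)⟩
      rw [s17_H_adj] at hab
      simp only [hK, SimpleGraph.comap_adj, Function.Embedding.subtype_apply, fromEdgeSet_adj,
        Finset.coe_inter, Set.mem_inter_iff, Finset.mem_coe, edgesWithin, Finset.mem_filter]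
      refine ⟨⟨hab.1, hA hab.1, ?_⟩, hab.2.2.2⟩
      intro w hw
      rw [Sym2.mem_iff] at hw
      rcases hw with rfl | rfl <;> assumption
    rw [Nat.card_eq_one_iff_unique]
    refine ⟨⟨?_⟩, ⟨K.connectedComponentMk ⟨z, hz⟩⟩⟩
    have : ∀ c : K.ConnectedComponent, c = K.connectedComponentMk ⟨z, hz⟩ := by
      intro c
      induction c using SimpleGraph.ConnectedComponent.ind with | _ y =>
      obtain ⟨y, hy⟩ := y
      obtain ⟨_, h⟩ := key y ((hzB y).1 hy)
      exact (SimpleGraph.ConnectedComponent.sound h).symm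
    intro a b
    rw [this a, this b]

theorem s17_count {G : SimpleGraph V} [DecidableRel G.Adj] {j : V} {A : Finset (Sym2 V)}
    (hA : A ⊆ G.edgeFinset)
    {π : Finpartition ((Finset.univ : Finset V).erase j)} (h : s17_valid G j A π) :
    kcomp Finset.univ A - 1 = (π.parts.filter (fun B => A ∩ edgesTo G B j = ∅)).card := by
  classical
  set H := SimpleGraph.fromEdgeSet (A : Set (Sym2 V)) with hH
  have h0 : kcomp Finset.univ A = Fintype.card H.ConnectedComponent := by
    unfold kcomp
    rw [← Nat.card_eq_fintype_card]
    refine Nat.card_congr (SimpleGraph.Iso.connectedComponentEquiv ?_)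
    rw [Finset.coe_univ]
    exact SimpleGraph.induceUnivIso H
  rw [h0, ← Finset.card_univ, ← Finset.card_erase_of_mem (Finset.mem_univ (H.connectedComponentMk j))]
  -- reachability inside blocks
  have hin : ∀ B ∈ π.parts, ∀ x ∈ B, ∀ y ∈ B, H.Reachable x y := by
    intro B hB x hx y hy
    refine (s17_reach (h.2 B hB) hx hy).mono (SimpleGraph.fromEdgeSet_mono ?_)
    intro e he
    simp only [Finset.coe_inter, Set.mem_inter_iff] at he
    exact he.1
  have hout : ∀ B ∈ π.parts, A ∩ edgesTo G B j = ∅ → ∀ x ∈ B, ∀ y, H.Reachable x y → y ∈ B := by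
    intro B hB he x hx y hr
    refine s17_closed (P := fun y => y ∈ B) ?_ hr hx
    intro a b hab ha
    simp only [hH, fromEdgeSet_adj, Finset.mem_coe] at hab
    have haj : a ≠ j := fun hh => s17_nj π hB (hh ▸ ha)
    by_cases hb : b = j
    · subst hb
      exfalso
      have : s(a, b) ∈ A ∩ edgesTo G B b := by
        simp only [edgesTo, Finset.mem_inter, Finset.mem_filter]
        exact ⟨hab.1, hA hab.1, a, ha, rfl⟩
      rw [he] at this
      simp at this
    · exact s17_same h hab.1 haj hb hB ha
  have hno : ∀ B ∈ π.parts, ∀ x ∈ B, ¬ H.Reachable x j → A ∩ edgesTo G B j = ∅ := by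
    intro B hB x hx hr
    rw [Finset.eq_empty_iff_forall_notMem]
    intro e he
    simp only [edgesTo, Finset.mem_inter, Finset.mem_filter] at he
    obtain ⟨he, _, y, hy, rfl⟩ := he
    refine hr ((hin B hB x hx y hy).trans (SimpleGraph.Adj.reachable ?_))
    simp only [hH, fromEdgeSet_adj, Finset.mem_coe]
    exact ⟨he, fun hh => s17_nj π hB (hh ▸ hy)⟩
  have hblk : ∀ B ∈ π.parts, A ∩ edgesTo G B j = ∅ → ∀ x ∈ B,
      Finset.univ.filter (fun y => H.connectedComponentMk y = H.connectedComponentMk x) = B := by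
    intro B hB he x hx
    ext y
    simp only [Finset.mem_filter, Finset.mem_univ, true_and]
    rw [SimpleGraph.ConnectedComponent.eq]
    exact ⟨fun hr => hout B hB he x hx y hr.symm, fun hy => hin B hB y hy x hx⟩
  refine Finset.card_bij
    (fun c _ => Finset.univ.filter (fun y => H.connectedComponentMk y = c)) ?_ ?_ ?_
  · intro c hc
    induction c using SimpleGraph.ConnectedComponent.ind with | _ x =>
    simp only [Finset.mem_erase, Finset.mem_univ, and_true, ne_eq] at hc
    rw [SimpleGraph.ConnectedComponent.eq] at hc
    have hxj : x ≠ j := fun hh => hc (hh ▸ SimpleGraph.Reachable.refl _)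
    obtain ⟨B, hB, hx⟩ := π.exists_mem (show x ∈ Finset.univ.erase j by simp [hxj])
    have he := hno B hB x hx hc
    rw [hblk B hB he x hx, Finset.mem_filter]
    exact ⟨hB, he⟩
  · intro c _ d _ hcd
    induction c using SimpleGraph.ConnectedComponent.ind with | _ x =>
    have : x ∈ Finset.univ.filter (fun y => H.connectedComponentMk y = H.connectedComponentMk x) := by
      simp
    rw [hcd] at this
    simpa using this
  · intro B hB
    rw [Finset.mem_filter] at hB
    obtain ⟨x, hx⟩ := π.nonempty_of_mem_parts hB.1
    refine ⟨H.connectedComponentMk x, ?_, hblk B hB.1 hB.2 x hx⟩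
    simp only [Finset.mem_erase, Finset.mem_univ, and_true, ne_eq]
    rw [SimpleGraph.ConnectedComponent.eq]
    exact fun hr => s17_nj π hB.1 (hout B hB.1 hB.2 x hx j hr)

theorem s17_term {G : SimpleGraph V} [DecidableRel G.Adj] {j : V} {A : Finset (Sym2 V)}
    (hA : A ⊆ G.edgeFinset) (q : R) (v : Sym2 V → R)
    {π : Finpartition ((Finset.univ : Finset V).erase j)} (h : s17_valid G j A π) :
    ∏ B ∈ π.parts, s17_f G q v j B (A ∩ (edgesWithin G B ∪ edgesTo G B j))
      = q ^ (kcomp Finset.univ A - 1) * ∏ e ∈ A, v e := by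
  have h1 : ∀ B ∈ π.parts, s17_f G q v j B (A ∩ (edgesWithin G B ∪ edgesTo G B j))
      = (if A ∩ edgesTo G B j = ∅ then q else 1) *
        ∏ e ∈ A ∩ (edgesWithin G B ∪ edgesTo G B j), v e := by
    intro B hB
    unfold s17_f
    rw [Finset.inter_assoc, Finset.inter_assoc, Finset.inter_eq_right.2 Finset.subset_union_left,
      Finset.inter_eq_right.2 Finset.subset_union_right, h.2 B hB, Finset.inter_union_distrib_left,
      Finset.prod_union]
    · simp only [if_true]; ring
    · exact (s17_disj G j B (s17_nj π hB)).mono Finset.inter_subset_right Finset.inter_subset_right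
  rw [Finset.prod_congr rfl h1, Finset.prod_mul_distrib, s17_count hA h]
  congr 1
  · rw [← Finset.prod_filter, Finset.prod_const]
  · rw [← Finset.prod_biUnion]
    · refine Finset.prod_congr ?_ fun _ _ => rfl
      rw [← Finset.inter_biUnion]
      exact Finset.inter_eq_left.2 h.1
    · intro B hB C hC hne
      exact (s17_tdisj G π B hB C hC hne).mono Finset.inter_subset_right Finset.inter_subset_right

end S17

theorem stmt17 {V : Type*} [Fintype V] [DecidableEq V] {R : Type*} [CommRing R]
    (G : SimpleGraph V) [DecidableRel G.Adj] (v : Sym2 V → R) (q : R)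
    (hV : 2 ≤ Fintype.card V) (j : V) :
    ZhatMv G Finset.univ q v
      = ∑ π : Finpartition ((Finset.univ : Finset V).erase j),
          ∏ B ∈ π.parts,
            ((q - 1 + ∏ e ∈ edgesTo G B j, (1 + v e)) * Cmv G B v) := by
  classical
  have hE : edgesWithin G Finset.univ = G.edgeFinset := by
    simp [edgesWithin]
  have h1 : ∀ π : Finpartition ((Finset.univ : Finset V).erase j),
      ∏ B ∈ π.parts, ((q - 1 + ∏ e ∈ edgesTo G B j, (1 + v e)) * Cmv G B v)
        = ∑ A ∈ G.edgeFinset.powerset,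
          if A ⊆ π.parts.biUnion (fun B => edgesWithin G B ∪ edgesTo G B j) then
            ∏ B ∈ π.parts, s17_f G q v j B (A ∩ (edgesWithin G B ∪ edgesTo G B j)) else 0 := by
    intro π
    rw [← Finset.sum_filter]
    rw [Finset.prod_congr rfl (fun B hB => (s17_block G q v j B (s17_nj π hB)).symm)]
    rw [← s17_sum_biUnion _ _ (s17_tdisj G π)]
    refine Finset.sum_congr ?_ fun _ _ => rfl
    ext A
    simp only [Finset.mem_filter, Finset.mem_powerset]
    refine ⟨fun h => ⟨h.trans ?_, h⟩, fun h => h.2⟩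
    rw [Finset.biUnion_subset]
    intro B _
    exact Finset.union_subset (Finset.filter_subset _ _) (Finset.filter_subset _ _)
  rw [Finset.sum_congr rfl (fun π _ => h1 π), Finset.sum_comm, ZhatMv, hE]
  refine Finset.sum_congr rfl fun A hA => ?_
  rw [Finset.mem_powerset] at hA
  obtain ⟨π, hπ⟩ := s17_exists G j A hA
  rw [Finset.sum_eq_single π]
  · rw [if_pos hπ.1, s17_term hA q v hπ]
  · intro ρ _ hne
    split_ifs with hs
    · by_contra hz
      refine hne (s17_unique (A := A) (G := G) ⟨hs, fun B hB => ?_⟩ hπ)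
      by_contra hk
      refine hz (Finset.prod_eq_zero hB ?_)
      unfold s17_f
      rw [Finset.inter_assoc, Finset.inter_eq_right.2 Finset.subset_union_left, if_neg hk]
      simp
    · rfl
  · intro hh
    exact absurd (Finset.mem_univ _) hh
end

section
/- For n ≥ 1 let C_n(v) = Σ_{A} v^{|A|}, where the sum runs over all edge subsets A of the complete graph on vertex set {1,…,n} such that the spanning subgraph ({1,…,n}, A) is connected, and v is an element of a commutative ring R. Then for every n ≥ 2: C_n(v) = Σ_{k=1}^{n-1} binom(n-2, k-1) · [ (1+v)^k - 1 ] · C_k(v) · C_{n-k}(v). -/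
open Finset SimpleGraph

/-- `C_n(v) = Σ_A v^{|A|}`, the sum over edge subsets `A` of the complete graph on
`{1,…,n}` such that the spanning subgraph `({1,…,n}, A)` is connected. -/
noncomputable def Cn {R : Type*} [CommRing R] (n : ℕ) (v : R) : R :=
  ∑ A ∈ (⊤ : SimpleGraph (Fin n)).edgeFinset.powerset.filter
      (fun A : Finset (Sym2 (Fin n)) =>
        Nat.card (SimpleGraph.fromEdgeSet
          ((A : Finset (Sym2 (Fin n))) : Set (Sym2 (Fin n)))).ConnectedComponent = 1),
    v ^ A.card

namespace Aux

open Classical in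
/-- generating function of connected graphs on `V`. -/
noncomputable def W {R : Type*} [CommRing R] (V : Type*) [Fintype V] (v : R) : R :=
  ∑ G : SimpleGraph V with G.Connected, v ^ G.edgeSet.ncard

lemma W_congr {R : Type*} [CommRing R] {V V' : Type*} [Fintype V] [Fintype V'] (e : V ≃ V')
    (v : R) : W V v = W V' v := by
  classical
  unfold W
  have key : ∀ G : SimpleGraph V, Nonempty (G ≃g e.simpleGraph G) := by
    intro G
    refine ⟨⟨e, ?_⟩⟩
    intro x y
    simp [Equiv.simpleGraph]
  refine Finset.sum_equiv e.simpleGraph ?_ ?_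
  · intro G
    obtain ⟨i⟩ := key G
    simp only [mem_filter, mem_univ, true_and]
    exact i.connected_iff
  · intro G _
    obtain ⟨i⟩ := key G
    congr 1
    exact Nat.card_congr i.mapEdgeSet

lemma Cn_eq_W {R : Type*} [CommRing R] (n : ℕ) (v : R) : Cn n v = W (Fin n) v := by
  classical
  unfold Cn W
  have hc : ∀ G : SimpleGraph (Fin n), Nat.card G.ConnectedComponent = 1 ↔ G.Connected := by
    intro G
    rw [Nat.card_eq_one_iff_unique]
    constructor
    · rintro ⟨h1, ⟨c⟩⟩
      have : Nonempty (Fin n) := by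
        induction c using ConnectedComponent.ind with
        | h x => exact ⟨x⟩
      refine ⟨fun x y => ?_⟩
      exact ConnectedComponent.exact (Subsingleton.elim _ _)
    · intro h
      have := h.nonempty
      exact ⟨h.preconnected.subsingleton_connectedComponent, ⟨G.connectedComponentMk this.some⟩⟩
  refine Finset.sum_bij' (fun A _ => SimpleGraph.fromEdgeSet (A : Set (Sym2 (Fin n))))
    (fun G _ => G.edgeFinset) ?_ ?_ ?_ ?_ ?_
  · intro A hA
    simp only [mem_filter, mem_univ, true_and] at hA ⊢
    exact (hc _).1 hA.2
  · intro G hG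
    simp only [mem_filter, mem_univ, true_and] at hG
    simp only [mem_filter, mem_powerset]
    refine ⟨edgeFinset_mono le_top, ?_⟩
    rw [hc]
    simpa using hG
  · intro A hA
    simp only [mem_filter, mem_powerset] at hA
    ext e
    simp only [mem_edgeFinset, edgeSet_fromEdgeSet, Set.mem_sdiff, mem_coe]
    constructor
    · exact fun h => h.1
    · intro h
      refine ⟨h, ?_⟩
      have := hA.1 h
      rw [mem_edgeFinset] at this
      exact not_isDiag_of_mem_edgeSet _ this
  · intro G hG
    simp
  · intro A hA
    simp only [mem_filter, mem_powerset] at hA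
    have : (SimpleGraph.fromEdgeSet (A : Set (Sym2 (Fin n)))).edgeSet = (A : Set (Sym2 (Fin n))) := by
      ext e
      simp only [edgeSet_fromEdgeSet, Set.mem_sdiff, mem_coe]
      constructor
      · exact fun h => h.1
      · intro h
        refine ⟨h, ?_⟩
        have := hA.1 h
        rw [mem_edgeFinset] at this
        exact not_isDiag_of_mem_edgeSet _ this
    rw [this, Set.ncard_coe_finset]

variable {V : Type*} (a b : V)

/-- `G` with the edges at `a` removed. -/
def del (G : SimpleGraph V) : SimpleGraph V where
  Adj x y := G.Adj x y ∧ x ≠ a ∧ y ≠ a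
  symm := ⟨fun _ _ h => ⟨h.1.symm, h.2.2, h.2.1⟩⟩
  loopless := ⟨fun _ h => h.1.ne rfl⟩

/-- gluing. -/
def build (S : Finset V) (ha : a ∉ S) (H₁ : SimpleGraph {x // x ∈ S}) (H₂ : SimpleGraph {x // x ∉ S})
    (N : Finset {x // x ∈ S}) : SimpleGraph V where
  Adj x y := (∃ (h : x ∈ S) (h' : y ∈ S), H₁.Adj ⟨x, h⟩ ⟨y, h'⟩) ∨
    (∃ (h : x ∉ S) (h' : y ∉ S), H₂.Adj ⟨x, h⟩ ⟨y, h'⟩) ∨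
    (x = a ∧ ∃ h : y ∈ S, ⟨y, h⟩ ∈ N) ∨ (y = a ∧ ∃ h : x ∈ S, ⟨x, h⟩ ∈ N)
  symm := ⟨by
    rintro x y (⟨h, h', H⟩ | ⟨h, h', H⟩ | h | h)
    · exact Or.inl ⟨h', h, H.symm⟩
    · exact Or.inr (Or.inl ⟨h', h, H.symm⟩)
    · exact Or.inr (Or.inr (Or.inr h))
    · exact Or.inr (Or.inr (Or.inl h))⟩
  loopless := ⟨by
    rintro x (⟨h, h', H⟩ | ⟨h, h', H⟩ | ⟨h, h', _⟩ | ⟨h, h', _⟩)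
    · exact H.ne rfl
    · exact H.ne rfl
    · exact ha (h ▸ h')
    · exact ha (h ▸ h')⟩

open Classical in
/-- the component of `b` in `G - a`. -/
noncomputable def comp [Fintype V] (G : SimpleGraph V) : Finset V :=
  univ.filter fun x => (del a G).Reachable b x

section
variable [Fintype V] {a b} {G : SimpleGraph V}

lemma mem_comp {x : V} : x ∈ comp a b G ↔ (del a G).Reachable b x := by simp [comp]

lemma b_mem : b ∈ comp a b G := mem_comp.2 (Reachable.refl _)

lemma a_notMem (hab : a ≠ b) : a ∉ comp a b G := by
  rw [mem_comp]
  intro h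
  obtain ⟨p⟩ := h.symm
  cases p with
  | nil => exact hab rfl
  | cons h _ => exact h.2.1 rfl

lemma comp_step {x y : V} (hx : x ∈ comp a b G) (h : G.Adj x y) (hxa : x ≠ a) (hya : y ≠ a) :
    y ∈ comp a b G := by
  rw [mem_comp] at *
  exact hx.trans (Adj.reachable (G := del a G) ⟨h, hxa, hya⟩)

lemma comp_conn : (G.induce {x | x ∈ comp a b G}).Connected := by
  have : ∀ x y (p : (del a G).Walk x y) (hx : x ∈ comp a b G), ∃ hy : y ∈ comp a b G,
      (G.induce {x | x ∈ comp a b G}).Reachable ⟨x, hx⟩ ⟨y, hy⟩ := by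
    intro x y p
    induction p with
    | nil => exact fun hx => ⟨hx, Reachable.refl _⟩
    | @cons u w _ h q ih =>
      intro hx
      have hw := comp_step hx h.1 h.2.1 h.2.2
      obtain ⟨hy, H⟩ := ih hw
      refine ⟨hy, Reachable.trans (Adj.reachable ?_) H⟩
      exact h.1
  rw [connected_iff_exists_forall_reachable]
  refine ⟨⟨b, b_mem⟩, ?_⟩
  rintro ⟨x, hx⟩
  obtain ⟨p⟩ := mem_comp.1 hx
  exact (this _ _ p b_mem).2

lemma compl_conn (hab : a ≠ b) (hG : G.Connected) :
    (G.induce {x | x ∉ comp a b G}).Connected := by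
  have : ∀ x y (p : G.Walk x y) (hy : y = a) (hx : x ∉ comp a b G),
      (G.induce {x | x ∉ comp a b G}).Reachable ⟨x, hx⟩ ⟨a, a_notMem hab⟩ := by
    intro x y p
    induction p with
    | nil => rintro rfl hx; exact Reachable.refl _
    | @cons u w _ h q ih =>
      intro hy hx
      by_cases hua : u = a
      · subst hua; exact Reachable.refl _
      have hw : w ∉ comp a b G := fun hw =>
        hx (comp_step hw h.symm (fun e => a_notMem hab (e ▸ hw)) hua)
      refine Reachable.trans (Adj.reachable ?_) (ih hy hw)
      exact h
  rw [connected_iff_exists_forall_reachable]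
  refine ⟨⟨a, a_notMem hab⟩, ?_⟩
  rintro ⟨x, hx⟩
  obtain ⟨p⟩ := hG.preconnected x a
  exact (this _ _ p rfl hx).symm

lemma exists_nbr (hab : a ≠ b) (hG : G.Connected) : ∃ x ∈ comp a b G, G.Adj a x := by
  have : ∀ x y (p : G.Walk x y) (hy : y = a) (hx : x ∈ comp a b G),
      ∃ x ∈ comp a b G, G.Adj a x := by
    intro x y p
    induction p with
    | nil => rintro rfl hx; exact absurd hx (a_notMem hab)
    | @cons u w _ h q ih =>
      intro hy hx
      by_cases hwa : w = a
      · subst hwa; exact ⟨u, hx, h.symm⟩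
      exact ih hy (comp_step hx h (fun e => a_notMem hab (e ▸ hx)) hwa)
  obtain ⟨p⟩ := hG.preconnected b a
  exact this _ _ p rfl b_mem

variable {S : Finset V} {ha : a ∉ S} {H₁ : SimpleGraph {x // x ∈ S}}
  {H₂ : SimpleGraph {x // x ∉ S}} {N : Finset {x // x ∈ S}}

lemma build_conn (h₁ : H₁.Connected) (h₂ : H₂.Connected) (hN : N.Nonempty) :
    (build a S ha H₁ H₂ N).Connected := by
  obtain ⟨⟨z, hz⟩, hzN⟩ := hN
  let f₁ : H₁ →g build a S ha H₁ H₂ N := ⟨Subtype.val, fun {x y} h => Or.inl ⟨x.2, y.2, h⟩⟩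
  let f₂ : H₂ →g build a S ha H₁ H₂ N :=
    ⟨Subtype.val, fun {x y} h => Or.inr (Or.inl ⟨x.2, y.2, h⟩)⟩
  rw [connected_iff_exists_forall_reachable]
  refine ⟨a, fun x => ?_⟩
  by_cases hx : x ∈ S
  · have h1 : (build a S ha H₁ H₂ N).Adj a z := Or.inr (Or.inr (Or.inl ⟨rfl, hz, hzN⟩))
    exact h1.reachable.trans ((h₁.preconnected ⟨z, hz⟩ ⟨x, hx⟩).map f₁)
  · exact (h₂.preconnected ⟨a, ha⟩ ⟨x, hx⟩).map f₂

lemma build_comp (hb : b ∈ S) (h₁ : H₁.Connected) :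
    comp a b (build a S ha H₁ H₂ N) = S := by
  ext x
  rw [mem_comp]
  constructor
  · rintro ⟨p⟩
    induction p with
    | nil => exact hb
    | @cons u w _ h q ih =>
      apply ih
      obtain ⟨(⟨h, h', H⟩ | ⟨h, h', H⟩ | ⟨h, h', _⟩ | ⟨h, h', _⟩), h2, h3⟩ := h
      · exact h'
      · exact absurd hb h
      · exact absurd h h2
      · exact absurd h h3
  · intro hx
    let f₁ : H₁ →g del a (build a S ha H₁ H₂ N) := ⟨Subtype.val, fun {x y} h =>
      ⟨Or.inl ⟨x.2, y.2, h⟩, fun e => ha (e ▸ x.2), fun e => ha (e ▸ y.2)⟩⟩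
    exact (h₁.preconnected ⟨b, hb⟩ ⟨x, hx⟩).map f₁

lemma build_ncard :
    (build a S ha H₁ H₂ N).edgeSet.ncard = H₁.edgeSet.ncard + H₂.edgeSet.ncard + N.card := by
  have he : (build a S ha H₁ H₂ N).edgeSet = (Sym2.map Subtype.val '' H₁.edgeSet ∪
      Sym2.map Subtype.val '' H₂.edgeSet) ∪ (fun y : {x // x ∈ S} => s(a, y.1)) '' N := by
    ext e
    induction e using Sym2.ind with
    | _ x y =>
    simp only [mem_edgeSet, Set.mem_union, Set.mem_image]
    constructor
    · rintro (⟨h, h', H⟩ | ⟨h, h', H⟩ | ⟨h, h', H⟩ | ⟨h, h', H⟩)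
      · exact Or.inl (Or.inl ⟨s(⟨x, h⟩, ⟨y, h'⟩), H, rfl⟩)
      · exact Or.inl (Or.inr ⟨s(⟨x, h⟩, ⟨y, h'⟩), H, rfl⟩)
      · exact Or.inr ⟨_, H, by rw [h]⟩
      · exact Or.inr ⟨_, H, by rw [h, Sym2.eq_swap]⟩
    · rintro ((⟨e, H, h⟩ | ⟨e, H, h⟩) | ⟨z, H, h⟩)
      · induction e using Sym2.ind with
        | _ u w =>
        rw [← mem_edgeSet, ← h]
        exact Or.inl ⟨u.2, w.2, H⟩
      · induction e using Sym2.ind with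
        | _ u w =>
        rw [← mem_edgeSet, ← h]
        exact Or.inr (Or.inl ⟨u.2, w.2, H⟩)
      · rw [← mem_edgeSet, ← h]
        exact Or.inr (Or.inr (Or.inl ⟨rfl, z.2, H⟩))
  have hd1 : Disjoint (Sym2.map Subtype.val '' H₁.edgeSet) (Sym2.map Subtype.val '' H₂.edgeSet) := by
    rw [Set.disjoint_left]
    rintro _ ⟨e, H, rfl⟩ ⟨e', H', h⟩
    induction e using Sym2.ind with
    | _ u w =>
    induction e' using Sym2.ind with
    | _ u' w' =>
    have h1 : u'.1 ∈ Sym2.map Subtype.val s(u, w) := by rw [← h]; simp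
    have := u'.2
    have := u.2
    have := w.2
    simp only [Sym2.map_mk, Sym2.mem_iff] at h1
    rcases h1 with h1 | h1 <;> simp_all
  have hd2 : Disjoint (Sym2.map Subtype.val '' H₁.edgeSet ∪
      Sym2.map Subtype.val '' H₂.edgeSet) ((fun y : {x // x ∈ S} => s(a, y.1)) '' N) := by
    rw [Set.disjoint_left]
    rintro _ (⟨e, H, rfl⟩ | ⟨e, H, rfl⟩) ⟨z, H', h⟩
    · induction e using Sym2.ind with
      | _ u w =>
      have h1 : a ∈ Sym2.map Subtype.val s(u, w) := by rw [← h]; simp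
      simp only [Sym2.map_mk, Sym2.mem_iff] at h1
      rcases h1 with h1 | h1
      · exact ha (h1 ▸ u.2)
      · exact ha (h1 ▸ w.2)
    · induction e using Sym2.ind with
      | _ u w =>
      have h1 : z.1 ∈ Sym2.map Subtype.val s(u, w) := by rw [← h]; simp
      have := u.2
      have := w.2
      have := z.2
      simp only [Sym2.map_mk, Sym2.mem_iff] at h1
      rcases h1 with h1 | h1 <;> simp_all
  have hi : Function.Injective (fun y : {x // x ∈ S} => s(a, y.1)) := by
    intro y z h
    simp only [Sym2.congr_right] at h
    exact Subtype.ext h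
  rw [he, Set.ncard_union_eq hd2 (Set.toFinite _) (Set.toFinite _),
    Set.ncard_union_eq hd1 (Set.toFinite _) (Set.toFinite _),
    Set.ncard_image_of_injective _ (Sym2.map.injective Subtype.val_injective),
    Set.ncard_image_of_injective _ (Sym2.map.injective Subtype.val_injective),
    Set.ncard_image_of_injective _ hi, Set.ncard_coe_finset]

end

lemma sum_nonempty {R : Type*} [CommRing R] {U : Type*} [Fintype U] [DecidableEq U] (v : R) :
    ∑ N : Finset U with N.Nonempty, v ^ N.card = (1 + v) ^ Fintype.card U - 1 := by
  have h1 : ∑ N : Finset U, v ^ N.card = (1 + v) ^ Fintype.card U := by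
    have := Finset.sum_pow_mul_eq_add_pow v 1 (univ : Finset U)
    simp only [one_pow, mul_one, powerset_univ] at this
    rw [this, add_comm, Finset.card_univ]
  rw [← h1, ← Finset.sum_filter_add_sum_filter_not univ (fun N : Finset U => N.Nonempty)]
  simp [Finset.not_nonempty_iff_eq_empty, Finset.filter_eq']

open Classical in
lemma fiber {R : Type*} [CommRing R] [Fintype V] (v : R) (hab : a ≠ b) (S : Finset V)
    (ha : a ∉ S) (hb : b ∈ S) :
    ∑ G : SimpleGraph V with G.Connected ∧ comp a b G = S, v ^ G.edgeSet.ncard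
      = ((1 + v) ^ S.card - 1) * W {x // x ∈ S} v * W {x // x ∉ S} v := by
  have h0 : ((1 + v) ^ S.card - 1 : R) =
      ∑ N : Finset {x // x ∈ S} with N.Nonempty, v ^ N.card := by
    rw [sum_nonempty]; simp
  rw [h0]
  unfold W
  rw [Finset.sum_mul_sum, ← Finset.sum_product', Finset.sum_mul_sum, ← Finset.sum_product']
  symm
  refine Finset.sum_bij' (fun t _ => build a S ha t.1.2 t.2 t.1.1)
    (fun G _ => ((univ.filter fun x => G.Adj a x.1, G.comap Subtype.val), G.comap Subtype.val))
    ?_ ?_ ?_ ?_ ?_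
  · rintro ⟨⟨N, H₁⟩, H₂⟩ h
    simp only [mem_product, mem_filter, mem_univ, true_and] at h ⊢
    exact ⟨build_conn h.1.2 h.2 h.1.1, build_comp hb h.1.2⟩
  · rintro G h
    simp only [mem_product, mem_filter, mem_univ, true_and] at h ⊢
    obtain ⟨hG, rfl⟩ := h
    refine ⟨⟨?_, comp_conn⟩, compl_conn hab hG⟩
    obtain ⟨x, hx, h⟩ := exists_nbr hab hG
    exact ⟨⟨x, hx⟩, by simpa using h⟩
  · rintro ⟨⟨N, H₁⟩, H₂⟩ h
    refine Prod.ext (Prod.ext ?_ ?_) ?_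
    · ext ⟨x, hx⟩
      have hxa : x ≠ a := fun e => ha (e ▸ hx)
      simp [build, ha, hx, hxa]
    · ext ⟨x, hx⟩ ⟨y, hy⟩
      have hxa : x ≠ a := fun e => ha (e ▸ hx)
      have hya : y ≠ a := fun e => ha (e ▸ hy)
      simp [build, hx, hy, hxa, hya]
    · ext ⟨x, hx⟩ ⟨y, hy⟩
      simp [build, hx, hy]
  · rintro G h
    simp only [mem_filter, mem_univ, true_and] at h
    obtain ⟨hG, rfl⟩ := h
    ext x y
    by_cases hx : x ∈ comp a b G <;> by_cases hy : y ∈ comp a b G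
    · have hxa : x ≠ a := fun e => ha (e ▸ hx)
      have hya : y ≠ a := fun e => ha (e ▸ hy)
      simp [build, hx, hy, hxa, hya]
    · have hxa : x ≠ a := fun e => ha (e ▸ hx)
      simp only [build, hx, hy, hxa]
      simp
      constructor
      · rintro ⟨rfl, h⟩
        exact h.symm
      · intro h
        have : y = a := by
          by_contra hya
          exact hy (comp_step hx h hxa hya)
        subst this
        exact ⟨rfl, h.symm⟩
    · have hya : y ≠ a := fun e => ha (e ▸ hy)
      simp only [build, hx, hy, hya]
      simp
      constructor
      · rintro ⟨rfl, h⟩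
        exact h
      · intro h
        have : x = a := by
          by_contra hxa
          exact hx (comp_step hy h.symm hya hxa)
        subst this
        exact ⟨rfl, h⟩
    · simp [build, hx, hy]
  · rintro ⟨⟨N, H₁⟩, H₂⟩ h
    simp only [build_ncard, pow_add]
    ring

lemma W_card {R : Type*} [CommRing R] [Fintype V] (v : R) : W V v = Cn (Fintype.card V) v := by
  rw [Cn_eq_W]
  exact W_congr (Fintype.equivFin V) v

open Classical in
lemma fiber_card {R : Type*} [CommRing R] [Fintype V] (v : R) (hab : a ≠ b) (S : Finset V)
    (ha : a ∉ S) (hb : b ∈ S) :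
    ∑ G : SimpleGraph V with G.Connected ∧ comp a b G = S, v ^ G.edgeSet.ncard
      = ((1 + v) ^ S.card - 1) * Cn S.card v * Cn (Fintype.card V - S.card) v := by
  rw [fiber a b v hab S ha hb, W_card, W_card]
  simp only [Fintype.card_subtype_compl, Fintype.card_coe]

lemma main {R : Type*} [CommRing R] [Fintype V] [DecidableEq V] (v : R) (hab : a ≠ b) :
    W V v = ∑ T ∈ (univ \ {a, b} : Finset V).powerset,
      ((1 + v) ^ (T.card + 1) - 1) * Cn (T.card + 1) v * Cn (Fintype.card V - (T.card + 1)) v := by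
  have h1 : W V v = ∑ S ∈ (univ : Finset (Finset V)) with (a ∉ S ∧ b ∈ S),
      ((1 + v) ^ S.card - 1) * Cn S.card v * Cn (Fintype.card V - S.card) v := by
    unfold W
    rw [← Finset.sum_fiberwise_of_maps_to (t := (univ : Finset (Finset V)).filter
      (fun S => a ∉ S ∧ b ∈ S)) (g := comp a b)]
    · refine Finset.sum_congr rfl fun S hS => ?_
      simp only [mem_filter, mem_univ, true_and] at hS
      rw [← fiber_card a b v hab S hS.1 hS.2]
      rw [Finset.filter_filter]
      convert rfl
    · intro G _
      simp only [mem_filter, mem_univ, true_and]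
      exact ⟨a_notMem hab, b_mem⟩
  rw [h1]
  refine Finset.sum_bij' (fun S _ => S.erase b) (fun T _ => insert b T) ?_ ?_ ?_ ?_ ?_
  · intro S hS
    simp only [mem_filter, mem_univ, true_and] at hS
    rw [mem_powerset]
    intro x hx
    rw [mem_erase] at hx
    simp only [mem_sdiff, mem_univ, true_and, mem_insert, mem_singleton, not_or]
    exact ⟨fun e => hS.1 (e ▸ hx.2), hx.1⟩
  · intro T hT
    rw [mem_powerset] at hT
    simp only [mem_filter, mem_univ, true_and, mem_insert, true_or, and_true, not_or]
    refine ⟨hab, fun h => ?_⟩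
    simpa using hT h
  · intro S hS
    simp only [mem_filter, mem_univ, true_and] at hS
    exact insert_erase hS.2
  · intro T hT
    rw [mem_powerset] at hT
    apply erase_insert
    intro h
    simpa using hT h
  · intro S hS
    simp only [mem_filter, mem_univ, true_and] at hS
    rw [card_erase_add_one hS.2]

end Aux

theorem stmt19 {R : Type*} [CommRing R] (v : R) (n : ℕ) (hn : 2 ≤ n) :
    Cn n v
      = ∑ k ∈ Finset.Icc 1 (n - 1),
          ((n - 2).choose (k - 1) : R) * ((1 + v) ^ k - 1) * Cn k v * Cn (n - k) v := by
  obtain ⟨m, rfl⟩ : ∃ m, n = m + 2 := ⟨n - 2, by omega⟩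
  have hab : (0 : Fin (m + 2)) ≠ 1 := by simp
  rw [Aux.Cn_eq_W, Aux.main 0 1 v hab, Finset.sum_powerset_apply_card
    (fun t => ((1 + v) ^ (t + 1) - 1) * Cn (t + 1) v * Cn (Fintype.card (Fin (m + 2)) - (t + 1)) v)]
  have hc : (univ \ {0, 1} : Finset (Fin (m + 2))).card = m := by
    rw [Finset.card_sdiff_of_subset (Finset.subset_univ _), Finset.card_pair hab]
    simp
  rw [hc, Finset.sum_bij' (fun t _ => t + 1) (fun k _ => k - 1)]
  · intro t ht
    simp only [mem_range, mem_Icc] at *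
    omega
  · intro t ht
    simp only [mem_range, mem_Icc] at *
    omega
  · intro t ht
    simp
  · intro t ht
    simp only [mem_Icc] at ht
    omega
  · intro t ht
    simp only [Fintype.card_fin, Nat.add_sub_cancel, nsmul_eq_mul, mul_assoc]
end
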